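/- Let d ≥ 1 be an integer, m ∈ ℝ, and k ∈ ℕ. Suppose α ∈ ℝ^d satisfies 0 ≤ α₁ ≤ α₂ ≤ … ≤ α_d ≤ 1/4 and the exact modulation-index constraint (4/π)·Σ_{i=1}^{d} (−1)^{i+1}·cos(2πα_i) = m. Then the Taylor-approximated constraint value satisfies m − Δm_k ≤ (4/π)·Σ_{i=1}^{d} (−1)^{i+1}·Γ_k(α_i) ≤ m + Δm_k, where Γ_k is the degree-k Taylor polynomial of cos(2π·) about α₀ = 1/8 and Δm_k = (4d/π)·(2π)^{k+1}·(1/8)^{k+1}/(k+1)!. In other words, every feasible point of the exact OPP problem is feasible for its level-k Taylor relaxation. -/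

import Mathlib

open Real

/-- The degree-`k` Taylor polynomial of `f(α) = cos(2πα)` about the expansion point `α₀`,
`Γ_k(α) = Σ_{n=0}^{k} f⁽ⁿ⁾(α₀)·(α − α₀)^n/n!`, evaluated at `α`. -/
noncomputable def taylorCos (k : ℕ) (α₀ α : ℝ) : ℝ :=
  ∑ n ∈ Finset.range (k + 1),
    iteratedDeriv n (fun t : ℝ => Real.cos (2 * π * t)) α₀ / n.factorial * (α - α₀) ^ n

section Taylor

open Set

theorem taylorWithinEval_eq_taylorWithinEval_univ {E : Type*} [NormedAddCommGroup E]
    [NormedSpace ℝ E] {f : ℝ → E} {n : ℕ} {s : Set ℝ} {x₀ : ℝ} (hs : UniqueDiffOn ℝ s)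
    (hx₀ : x₀ ∈ s) (hf : ContDiffAt ℝ n f x₀) (x : ℝ) :
    taylorWithinEval f n s x₀ x = taylorWithinEval f n univ x₀ x := by
  simp only [taylor_within_apply, iteratedDerivWithin_univ]
  refine Finset.sum_congr rfl fun j hj => ?_
  have hjn : j ≤ n := Nat.lt_succ_iff.1 (Finset.mem_range.1 hj)
  rw [iteratedDerivWithin_eq_iteratedDeriv hs (hf.of_le (by exact_mod_cast hjn)) hx₀]

theorem abs_sub_taylorWithinEval_univ_le {f : ℝ → ℝ} {n : ℕ} {C x₀ x : ℝ}
    (hf : ContDiff ℝ (n + 1) f) (hC : ∀ y ∈ uIoo x₀ x, |iteratedDeriv (n + 1) f y| ≤ C) :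
    |f x - taylorWithinEval f n univ x₀ x| ≤ C * |x - x₀| ^ (n + 1) / (n + 1).factorial := by
  rcases eq_or_ne x₀ x with rfl | hx
  · simp
  · obtain ⟨y, hy, hremainder⟩ :=
      taylor_mean_remainder_lagrange_iteratedDeriv hx hf.contDiffOn
    rw [← taylorWithinEval_eq_taylorWithinEval_univ (uniqueDiffOn_uIcc hx) left_mem_uIcc
      (hf.contDiffAt.of_le le_self_add), hremainder, abs_div, abs_mul, abs_pow, Nat.abs_cast]
    gcongr
    exact hC y hy

end Taylor

theorem abs_iteratedDeriv_cos_const_mul_le (n : ℕ) (c x : ℝ) :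
    |iteratedDeriv n (fun t : ℝ => Real.cos (c * t)) x| ≤ |c| ^ n := by
  rw [iteratedDeriv_comp_const_mul Real.contDiff_cos, abs_mul, abs_pow]
  exact mul_le_of_le_one_right (by positivity) (Real.abs_iteratedDeriv_cos_le_one n _)

theorem taylorCos_eq_taylorWithinEval_univ (k : ℕ) (x₀ x : ℝ) :
    taylorCos k x₀ x =
      taylorWithinEval (fun t : ℝ => Real.cos (2 * π * t)) k Set.univ x₀ x := by
  simp only [taylorCos, taylor_within_apply, iteratedDerivWithin_univ, smul_eq_mul]
  exact Finset.sum_congr rfl fun _ _ => by ring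

theorem abs_cos_two_pi_mul_sub_taylorCos_le (k : ℕ) (x₀ x : ℝ) :
    |Real.cos (2 * π * x) - taylorCos k x₀ x|
      ≤ (2 * π) ^ (k + 1) * |x - x₀| ^ (k + 1) / (k + 1).factorial := by
  rw [taylorCos_eq_taylorWithinEval_univ]
  refine abs_sub_taylorWithinEval_univ_le (f := fun t => Real.cos (2 * π * t)) (by fun_prop)
    fun y _ => ?_
  simpa only [abs_of_pos Real.two_pi_pos] using
    abs_iteratedDeriv_cos_const_mul_le (k + 1) (2 * π) y

theorem norm_sum_mul_sub_sum_mul_le {ι R : Type*} [NonUnitalSeminormedRing R] (s : Finset ι)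
    {u f g : ι → R} {ε : ℝ} (hu : ∀ i ∈ s, ‖u i‖ ≤ 1) (hfg : ∀ i ∈ s, ‖f i - g i‖ ≤ ε) :
    ‖∑ i ∈ s, u i * f i - ∑ i ∈ s, u i * g i‖ ≤ s.card * ε := by
  rw [← Finset.sum_sub_distrib, ← nsmul_eq_mul, ← Finset.sum_const]
  refine norm_sum_le_of_le s fun i hi => ?_
  calc
    ‖u i * f i - u i * g i‖ = ‖u i * (f i - g i)‖ := by rw [mul_sub]
    _ ≤ ‖u i‖ * ‖f i - g i‖ := norm_mul_le _ _
    _ ≤ ‖f i - g i‖ := mul_le_of_le_one_left (norm_nonneg _) (hu i hi)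
    _ ≤ ε := hfg i hi

theorem exact_feasible_implies_relaxed_feasible_general {ι : Type*} [Fintype ι] (m : ℝ) (k : ℕ)
    {x₀ r : ℝ} {u α : ι → ℝ} (hu : ∀ i, |u i| ≤ 1) (hα : ∀ i, |α i - x₀| ≤ r)
    (heq : (4 / π) * ∑ i, u i * Real.cos (2 * π * α i) = m) :
    m - (4 * (Fintype.card ι : ℝ) / π) * (2 * π) ^ (k + 1) * r ^ (k + 1) / (k + 1).factorial
        ≤ (4 / π) * ∑ i, u i * taylorCos k x₀ (α i)
    ∧ (4 / π) * ∑ i, u i * taylorCos k x₀ (α i)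
        ≤ m + (4 * (Fintype.card ι : ℝ) / π) * (2 * π) ^ (k + 1) * r ^ (k + 1)
            / (k + 1).factorial := by
  have hpoint (i : ι) : |Real.cos (2 * π * α i) - taylorCos k x₀ (α i)|
      ≤ (2 * π) ^ (k + 1) * r ^ (k + 1) / (k + 1).factorial := by
    grw [abs_cos_two_pi_mul_sub_taylorCos_le, hα i]
  have hsum : |∑ i, u i * Real.cos (2 * π * α i) - ∑ i, u i * taylorCos k x₀ (α i)|
      ≤ Fintype.card ι * ((2 * π) ^ (k + 1) * r ^ (k + 1) / (k + 1).factorial) := by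
    rw [← Real.norm_eq_abs, ← Finset.card_univ]
    exact norm_sum_mul_sub_sum_mul_le Finset.univ (fun i _ => hu i) fun i _ => hpoint i
  have hscaled : |m - (4 / π) * ∑ i, u i * taylorCos k x₀ (α i)|
      ≤ (4 * (Fintype.card ι : ℝ) / π) * (2 * π) ^ (k + 1) * r ^ (k + 1) / (k + 1).factorial := by
    rw [← heq, ← mul_sub, abs_mul, abs_of_pos (by positivity : 0 < 4 / π)]
    exact (mul_le_mul_of_nonneg_left hsum (by positivity)).trans_eq (by ring)
  obtain ⟨hlower, hupper⟩ := abs_sub_le_iff.1 hscaled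
  exact ⟨sub_le_comm.1 hlower, sub_le_iff_le_add'.1 hupper⟩

/-- Let d ≥ 1, m ∈ ℝ, k ∈ ℕ. Suppose α ∈ ℝ^d satisfies
0 ≤ α₁ ≤ … ≤ α_d ≤ 1/4 and (4/π)·Σ_{i=1}^d (−1)^{i+1}·cos(2πα_i) = m.  Then
m − Δm_k ≤ (4/π)·Σ_{i=1}^d (−1)^{i+1}·Γ_k(α_i) ≤ m + Δm_k, with Γ_k the degree-k Taylor
polynomial of cos(2π·) about α₀ = 1/8 and Δm_k = (4d/π)·(2π)^{k+1}·(1/8)^{k+1}/(k+1)!.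
(Indexing by `i : Fin d`, the transition `(−1)^{i+1}` of the 1-based index `i+1`
becomes `(−1)^{i}` for the 0-based index.) -/
theorem exact_feasible_implies_relaxed_feasible (d : ℕ) (hd : 1 ≤ d) (m : ℝ) (k : ℕ)
    (α : Fin d → ℝ) (hmono : Monotone α) (h0 : ∀ i, 0 ≤ α i) (h1 : ∀ i, α i ≤ 1 / 4)
    (heq : (4 / π) * ∑ i : Fin d, (-1 : ℝ) ^ (i : ℕ) * Real.cos (2 * π * α i) = m) :
    m - (4 * (d : ℝ) / π) * (2 * π) ^ (k + 1) * (1 / 8 : ℝ) ^ (k + 1) / (k + 1).factorial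
        ≤ (4 / π) * ∑ i : Fin d, (-1 : ℝ) ^ (i : ℕ) * taylorCos k (1 / 8) (α i)
    ∧ (4 / π) * ∑ i : Fin d, (-1 : ℝ) ^ (i : ℕ) * taylorCos k (1 / 8) (α i)
        ≤ m + (4 * (d : ℝ) / π) * (2 * π) ^ (k + 1) * (1 / 8 : ℝ) ^ (k + 1)
            / (k + 1).factorial := by
  have hdist (i : Fin d) : |α i - 1 / 8| ≤ 1 / 8 :=
    abs_le.2 ⟨by linarith only [h0 i], by linarith only [h1 i]⟩
  simpa only [Fintype.card_fin] using
    exact_feasible_implies_relaxed_feasible_general m k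
      (fun i : Fin d => (abs_neg_one_pow (i : ℕ)).le) hdist heq
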